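/- Let 0 ≤ β < 4 and α > 0. Then for every smooth function u : ℝ⁴ → ℝ with ∫_{ℝ⁴}(|Δu|² + |∇u|² + u²) dx < ∞, one has ∫_{ℝ⁴} (e^{α u²} − 1)/|x|^β dx < ∞. -/

import Mathlib

/-!
Near the origin `u` is bounded and `|x|^{-β}` is integrable because `β < 4`; away from it the weight
is at most one. So everything rests on `∫ (e^{αu²} - 1) < ∞` for *every* `α > 0`.

Pairing `Δ(ηu(x + ·))`, with `η` a cutoff equal to one at the origin, with the regularised Newtonian
kernel `1/(|z|² + δ²)`, whose Laplacian is `-8δ²/(|z|² + δ²)³`, and letting `δ → 0` gives the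
pointwise bound `|u| ≤ T F` (`exists_enorm_le_pot`), where
`T F(x) = ∫_{|z|<1} |z|^{-2} F(x+z) dz` and `F` is a constant times `|Δu| + |∇u| + |u|`, which lies
in `L²`.

Two applications of Hölder's inequality, together with `∫_{|z|<1} |z|^{-4+ε} dz = C/ε` for `ε = 1/k`,
give the moment bounds `∫ (T F)^{2k} ≤ C (C k)^k ‖F‖₂^{2k}` (`lintegral_pot_pow_le`). As
`k^k / k! ≤ e^k`, the exponential series of `α (T F)²` converges when `‖F‖₂` is small. In general
`F = F₁ + F₂` with `F₁` bounded and `‖F₂‖₂` as small as desired: `T F₁` is bounded and in `L²`, so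
its exponential series converges too, and the two pieces are combined term by term in the power
series (`lintegral_exp_lt_top`).
-/

open MeasureTheory Real Filter Topology ENNReal

noncomputable section

/-- Four-dimensional Euclidean space with Lebesgue measure. -/
abbrev R4 : Type := EuclideanSpace ℝ (Fin 4)

/-- The Laplacian of `u : ℝ⁴ → ℝ`, as the sum of the pure second derivatives
along the coordinate directions. -/
noncomputable def lapl (u : R4 → ℝ) (x : R4) : ℝ :=
  ∑ i : Fin 4, iteratedFDeriv ℝ 2 u x ![EuclideanSpace.single i 1, EuclideanSpace.single i 1]

/-! ### Truncated potentials and their moments -/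

/-- The weight `‖z‖ ^ (-s)` as an extended nonnegative function.  Since `0 ^ (-s) = 0` for real
powers with `s ≠ 0`, it is finite everywhere, including at the origin. -/
def wt (s : ℝ) (z : R4) : ℝ≥0∞ := ENNReal.ofReal (‖z‖ ^ (-s))

lemma measurable_wt (s : ℝ) : Measurable (wt s) := by
  unfold wt; fun_prop

lemma wt_mul {s t : ℝ} (h : s + t ≠ 0) (z : R4) : wt s z * wt t z = wt (s + t) z := by
  unfold wt
  rw [← ENNReal.ofReal_mul (by positivity), ← Real.rpow_add' (norm_nonneg _) (by
    intro h'; apply h; linarith)]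
  congr 2; ring

lemma wt_rpow (s : ℝ) {p : ℝ} (hp : 0 ≤ p) (z : R4) : wt s z ^ p = wt (s * p) z := by
  unfold wt
  rw [ENNReal.ofReal_rpow_of_nonneg (by positivity) hp, ← Real.rpow_mul (norm_nonneg _)]
  congr 2; ring

/-- In dimension four `∫_{|z|<1} |z|^{-s} dz` is finite for `s < 4` and blows up like `1/(4-s)`;
this rate is what produces the square-exponential integrability. -/
lemma lintegral_wt : ∃ C : ℝ, 0 ≤ C ∧ ∀ s : ℝ, s < 4 →
    ∫⁻ z in Metric.ball (0 : R4) 1, wt s z ≤ ENNReal.ofReal (C / (4 - s)) := by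
  refine ⟨4 * (volume : Measure R4).real (Metric.ball 0 1), by positivity, fun s hs => ?_⟩
  have hpow : ∀ y ∈ Set.Ioo (0 : ℝ) 1, y ^ 3 * y ^ (-s) = y ^ (3 - s) := by
    intro y hy
    rw [← Real.rpow_natCast, ← Real.rpow_add hy.1]; congr 1
  have hwint : IntegrableOn (fun z : R4 => ‖z‖ ^ (-s)) (Metric.ball 0 1) := by
    rw [integrableOn_fun_norm_addHaar volume (f := fun y => y ^ (-s))]
    simp only [finrank_euclideanSpace, Fintype.card_fin, Nat.add_one_sub_one, smul_eq_mul]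
    rw [integrableOn_congr_fun hpow measurableSet_Ioo,
      intervalIntegral.integrableOn_Ioo_rpow_iff one_pos]
    linarith
  unfold wt
  rw [← ofReal_integral_eq_lintegral_ofReal hwint (ae_of_all _ fun z => by positivity)]
  apply ENNReal.ofReal_le_ofReal
  have h1 : ∫ z in Metric.ball (0 : R4) 1, ‖z‖ ^ (-s)
      = ∫ z : R4, (Set.Iio (1 : ℝ)).indicator (fun y => y ^ (-s)) ‖z‖ := by
    rw [← integral_indicator measurableSet_ball]
    congr 1; ext z; simp [Set.indicator]
  have h2 : ∫ y in Set.Ioi (0 : ℝ), y ^ 3 * (Set.Iio (1 : ℝ)).indicator (fun y => y ^ (-s)) y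
      = ∫ y in Set.Ioo (0 : ℝ) 1, y ^ (3 - s) := by
    rw [← integral_indicator measurableSet_Ioi, ← integral_indicator measurableSet_Ioo]
    congr 1; ext y
    by_cases h0 : 0 < y <;> by_cases h1 : y < 1 <;> simp [h0, h1]
    exact hpow y ⟨h0, h1⟩
  rw [h1, integral_fun_norm_addHaar]
  simp only [finrank_euclideanSpace, Fintype.card_fin, Nat.add_one_sub_one, smul_eq_mul, h2]
  rw [← integral_Ioc_eq_integral_Ioo, ← intervalIntegral.integral_of_le zero_le_one,
    integral_rpow (by left; linarith)]
  rw [Real.one_rpow, Real.zero_rpow (by linarith), nsmul_eq_mul]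
  apply le_of_eq
  rw [show 3 - s + 1 = 4 - s by ring]
  push_cast; ring

/-- The truncated potential `(T F)(x) = ∫_{|z|<1} |z|^{-2} F(x+z) dz`. -/
def pot (F : R4 → ℝ≥0∞) (x : R4) : ℝ≥0∞ :=
  ∫⁻ z in Metric.ball (0 : R4) 1, wt 2 z * F (x + z)

lemma measurable_pot {F : R4 → ℝ≥0∞} (hF : Measurable F) : Measurable (pot F) := by
  unfold pot
  apply Measurable.lintegral_prod_right' (f := fun p : R4 × R4 => wt 2 p.2 * F (p.1 + p.2))
  have := measurable_wt 2
  fun_prop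

lemma pot_add {F G : R4 → ℝ≥0∞} (hF : Measurable F) (x : R4) :
    pot (fun y => F y + G y) x = pot F x + pot G x := by
  unfold pot
  have := measurable_wt 2
  rw [← lintegral_add_left (by fun_prop)]
  simp only [mul_add]

/-- Pointwise Hölder estimate for the potential, with the exponent of the kernel split as
`2 = (4 - 1/k)/2 + 1/(2k)`. -/
lemma pot_pow_le {F : R4 → ℝ≥0∞} (hF : Measurable F) (k : ℕ) (hk : 1 ≤ k) (x : R4) :
    pot F x ^ (2 * k) ≤ (∫⁻ z in Metric.ball (0 : R4) 1, wt (4 - 1 / k) z) ^ k *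
      ((∫⁻ z in Metric.ball (0 : R4) 1, wt 1 z * F (x + z) ^ 2) * (∫⁻ y, F y ^ 2) ^ (k - 1)) := by
  have hk0 : (0 : ℝ) < k := by exact_mod_cast hk
  have hk1 : (1 : ℝ) ≤ k := by exact_mod_cast hk
  have hw := measurable_wt
  have hinv : (1 : ℝ) / k ≤ 1 := by rw [div_le_one hk0]; exact hk1
  have hinv0 : (0 : ℝ) < 1 / k := by positivity
  have h1 : pot F x ≤ (∫⁻ z in Metric.ball (0 : R4) 1, wt (4 - 1 / k) z) ^ (1 / 2 : ℝ) *
      (∫⁻ z in Metric.ball (0 : R4) 1, wt (1 / k) z * F (x + z) ^ 2) ^ (1 / 2 : ℝ) := by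
    have := ENNReal.lintegral_mul_norm_pow_le
      (μ := volume.restrict (Metric.ball (0 : R4) 1))
      (f := wt (4 - 1 / k)) (g := fun z => wt (1 / k) z * F (x + z) ^ 2)
      (hw _).aemeasurable (by have := hw (1 / k); fun_prop) (p := 1 / 2) (q := 1 / 2)
      (by norm_num) (by norm_num) (by norm_num)
    refine le_trans (le_of_eq ?_) this
    unfold pot
    congr 1; ext z
    rw [ENNReal.mul_rpow_of_nonneg _ _ (by norm_num), ← mul_assoc, wt_rpow _ (by norm_num),
      wt_rpow _ (by norm_num), wt_mul (by ring_nf; norm_num), ← ENNReal.rpow_natCast,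
      ← ENNReal.rpow_mul]
    norm_num
    congr 2; ring
  have h2 : (∫⁻ z in Metric.ball (0 : R4) 1, wt (1 / k) z * F (x + z) ^ 2) ≤
      (∫⁻ z in Metric.ball (0 : R4) 1, wt 1 z * F (x + z) ^ 2) ^ (1 / k : ℝ) *
      (∫⁻ y, F y ^ 2) ^ (1 - 1 / k : ℝ) := by
    have := ENNReal.lintegral_mul_norm_pow_le
      (μ := volume.restrict (Metric.ball (0 : R4) 1))
      (f := fun z => wt 1 z * F (x + z) ^ 2) (g := fun z => F (x + z) ^ 2)
      (by have := hw 1; fun_prop) (by fun_prop) (p := 1 / k) (q := 1 - 1 / k)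
      hinv0.le (by linarith) (by ring)
    refine le_trans (le_of_eq ?_) (this.trans ?_)
    · congr 1; ext z
      rw [ENNReal.mul_rpow_of_nonneg _ _ hinv0.le, wt_rpow _ hinv0.le, one_mul, mul_assoc,
        ← ENNReal.rpow_add_of_nonneg _ _ hinv0.le (by linarith), add_sub_cancel, ENNReal.rpow_one]
    · refine mul_le_mul' le_rfl (ENNReal.rpow_le_rpow ?_ (by linarith))
      refine (setLIntegral_le_lintegral _ _).trans (le_of_eq ?_)
      exact lintegral_add_left_eq_self (fun y => F y ^ 2) x
  calc pot F x ^ (2 * k)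
      ≤ ((∫⁻ z in Metric.ball (0 : R4) 1, wt (4 - 1 / k) z) ^ (1 / 2 : ℝ) *
      (∫⁻ z in Metric.ball (0 : R4) 1, wt (1 / k) z * F (x + z) ^ 2) ^ (1 / 2 : ℝ)) ^ (2 * k) := by
        gcongr
    _ = (∫⁻ z in Metric.ball (0 : R4) 1, wt (4 - 1 / k) z) ^ k *
        (∫⁻ z in Metric.ball (0 : R4) 1, wt (1 / k) z * F (x + z) ^ 2) ^ k := by
        rw [mul_pow]
        simp only [← ENNReal.rpow_natCast, ← ENNReal.rpow_mul]
        push_cast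
        congr 2 <;> ring
    _ ≤ _ := by
        gcongr
        calc _ ≤ ((∫⁻ z in Metric.ball (0 : R4) 1, wt 1 z * F (x + z) ^ 2) ^ (1 / k : ℝ) *
              (∫⁻ y, F y ^ 2) ^ (1 - 1 / k : ℝ)) ^ k := by gcongr
          _ = _ := by
            rw [mul_pow]
            simp only [← ENNReal.rpow_natCast, ← ENNReal.rpow_mul]
            rw [Nat.cast_sub hk, one_div_mul_cancel hk0.ne', ENNReal.rpow_one]
            push_cast
            congr 2; field_simp

/-- Moment bounds for the potential: `‖T F‖_{2k} ≲ √k ‖F‖₂`. -/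
lemma lintegral_pot_pow_le : ∃ C : ℝ, 0 ≤ C ∧ ∀ F : R4 → ℝ≥0∞, Measurable F → ∀ k : ℕ, 1 ≤ k →
    ∫⁻ x, pot F x ^ (2 * k) ≤ ENNReal.ofReal (C * k) ^ k * ENNReal.ofReal C *
      (∫⁻ y, F y ^ 2) ^ k := by
  obtain ⟨C, hC0, hC⟩ := lintegral_wt
  refine ⟨C, hC0, fun F hF k hk => ?_⟩
  have hw := measurable_wt
  have hk0 : (0 : ℝ) < k := by exact_mod_cast hk
  have e1 : ∫⁻ z in Metric.ball (0 : R4) 1, wt (4 - 1 / k) z ≤ ENNReal.ofReal (C * k) := by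
    refine (hC _ ?_).trans (le_of_eq ?_)
    · have : (0 : ℝ) < 1 / k := by positivity
      linarith
    · congr 1; field_simp; ring
  have e2 : ∫⁻ z in Metric.ball (0 : R4) 1, wt 1 z ≤ ENNReal.ofReal C := by
    refine (hC 1 (by norm_num)).trans (ENNReal.ofReal_le_ofReal ?_)
    linarith
  have e3 : ∫⁻ x, (∫⁻ z in Metric.ball (0 : R4) 1, wt 1 z * F (x + z) ^ 2) =
      (∫⁻ z in Metric.ball (0 : R4) 1, wt 1 z) * ∫⁻ y, F y ^ 2 := by
    rw [lintegral_lintegral_swap (by have := hw 1; fun_prop), ← lintegral_mul_const _ (hw 1)]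
    congr 1; ext z
    rw [lintegral_const_mul _ (by fun_prop)]
    congr 1
    exact lintegral_add_right_eq_self (fun y => F y ^ 2) z
  have hmeas : Measurable fun x : R4 => ∫⁻ z in Metric.ball (0 : R4) 1, wt 1 z * F (x + z) ^ 2 := by
    apply Measurable.lintegral_prod_right' (f := fun p : R4 × R4 => wt 1 p.2 * F (p.1 + p.2) ^ 2)
    have := hw 1
    fun_prop
  calc ∫⁻ x, pot F x ^ (2 * k) ≤ ∫⁻ x, ENNReal.ofReal (C * k) ^ k *
      ((∫⁻ z in Metric.ball (0 : R4) 1, wt 1 z * F (x + z) ^ 2) * (∫⁻ y, F y ^ 2) ^ (k - 1)) := by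
        refine lintegral_mono fun x => (pot_pow_le hF k hk x).trans ?_
        gcongr
    _ = ENNReal.ofReal (C * k) ^ k * (((∫⁻ z in Metric.ball (0 : R4) 1, wt 1 z) * ∫⁻ y, F y ^ 2) *
          (∫⁻ y, F y ^ 2) ^ (k - 1)) := by
        rw [lintegral_const_mul _ (by fun_prop), lintegral_mul_const _ hmeas, e3]
    _ ≤ ENNReal.ofReal (C * k) ^ k * ((ENNReal.ofReal C * ∫⁻ y, F y ^ 2) *
          (∫⁻ y, F y ^ 2) ^ (k - 1)) := by gcongr
    _ = _ := by
        obtain ⟨j, rfl⟩ : ∃ j, k = j + 1 := ⟨k - 1, by omega⟩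
        simp only [Nat.add_sub_cancel]
        ring

/-! ### Square-exponential integrability of potentials -/

lemma ofReal_exp_sub_one_eq (α t : ℝ) (hα : 0 ≤ α) :
    ENNReal.ofReal (Real.exp (α * t ^ 2) - 1) =
      ∑' j : ℕ, ENNReal.ofReal (α ^ (j + 1) / (j + 1).factorial) * ‖t‖ₑ ^ (2 * (j + 1)) := by
  have hs : HasSum (fun n : ℕ => (α * t ^ 2) ^ n / n.factorial) (Real.exp (α * t ^ 2)) := by
    rw [Real.exp_eq_exp_ℝ]; exact NormedSpace.expSeries_div_hasSum_exp _
  have hs' : HasSum (fun n : ℕ => (α * t ^ 2) ^ (n + 1) / (n + 1).factorial)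
      (Real.exp (α * t ^ 2) - 1) := by
    have := (hasSum_nat_add_iff' 1).2 hs
    simpa using this
  rw [← hs'.tsum_eq, ENNReal.ofReal_tsum_of_nonneg (fun n => by positivity) hs'.summable]
  congr 1; ext j
  rw [Real.enorm_eq_ofReal_abs, ← ENNReal.ofReal_pow (abs_nonneg _),
    ← ENNReal.ofReal_mul (by positivity), pow_mul |t|, sq_abs, mul_pow]
  congr 1; ring

lemma add_pow_le_two_pow (a b : ℝ≥0∞) (n : ℕ) : (a + b) ^ n ≤ 2 ^ n * (a ^ n + b ^ n) := by
  rcases le_total a b with h | h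
  · calc (a + b) ^ n ≤ (2 * b) ^ n := by rw [two_mul]; gcongr
      _ ≤ _ := by rw [mul_pow]; gcongr; exact le_add_self
  · calc (a + b) ^ n ≤ (2 * a) ^ n := by rw [two_mul]; gcongr
      _ ≤ _ := by rw [mul_pow]; gcongr; exact le_self_add

/-- The part of an `L²` function above a high level has small `L²` norm. -/
lemma exists_level {F : R4 → ℝ≥0∞} (hF : Measurable F) (hfin : ∀ x, F x ≠ ⊤)
    (hF2 : ∫⁻ y, F y ^ 2 ≠ ⊤) {δ : ℝ≥0∞} (hδ : 0 < δ) :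
    ∃ M : ℕ, ∫⁻ y, ({y | (M : ℝ≥0∞) < F y}.indicator F y) ^ 2 ≤ δ := by
  have hm : ∀ M : ℕ, MeasurableSet {y | (M : ℝ≥0∞) < F y} := fun M =>
    measurableSet_lt measurable_const hF
  have : Tendsto (fun M : ℕ => ∫⁻ y, ({y | (M : ℝ≥0∞) < F y}.indicator F y) ^ 2) atTop
      (𝓝 (∫⁻ _ : R4, 0)) := by
    refine tendsto_lintegral_of_dominated_convergence (fun y => F y ^ 2)
      (fun M => (hF.indicator (hm M)).pow_const 2) (fun M => ae_of_all _ fun y => ?_) hF2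
      (ae_of_all _ fun y => ?_)
    · exact pow_le_pow_left' (Set.indicator_le_self _ _ y) 2
    · obtain ⟨n, hn⟩ := ENNReal.exists_nat_gt (hfin y)
      refine tendsto_const_nhds.congr' ?_
      filter_upwards [eventually_ge_atTop n] with m hm
      have : F y ≤ m := hn.le.trans (by exact_mod_cast hm)
      simp [Set.indicator, not_lt.2 this]
  rw [lintegral_zero] at this
  exact ((this.eventually (gt_mem_nhds hδ)).exists).imp fun _ h => h.le

/-- A function dominated by the potential of an `L²` function has all its
square-exponential integrals finite. -/
lemma lintegral_exp_lt_top {u : R4 → ℝ} (hu : Measurable u) {F : R4 → ℝ≥0∞}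
    (hF : Measurable F) (hfin : ∀ x, F x ≠ ⊤) (hF2 : ∫⁻ y, F y ^ 2 ≠ ⊤)
    (hle : ∀ x, ‖u x‖ₑ ≤ pot F x) {α : ℝ} (hα : 0 < α) :
    ∫⁻ x, ENNReal.ofReal (Real.exp (α * u x ^ 2) - 1) < ⊤ := by
  obtain ⟨C, hC0, hC⟩ := lintegral_pot_pow_le
  obtain ⟨C', hC'0, hC'⟩ := lintegral_wt
  -- `δ` is small enough for the series of moments of the unbounded part to be geometric.
  obtain ⟨δ, hδ, hδ'⟩ : ∃ δ : ℝ, 0 < δ ∧ 4 * α * C * δ * Real.exp 1 ≤ 1 / 2 := by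
    refine ⟨1 / (2 * (4 * α * C * Real.exp 1 + 1)), by positivity, ?_⟩
    have : 0 ≤ 4 * α * C * Real.exp 1 := by positivity
    rw [mul_one_div, div_mul_eq_mul_div, div_le_div_iff₀ (by positivity) (by norm_num)]
    linarith
  obtain ⟨M, hM⟩ := exists_level hF hfin hF2 (δ := ENNReal.ofReal δ) (by simpa using hδ)
  set S := {y | (M : ℝ≥0∞) < F y} with hS
  have hSm : MeasurableSet S := measurableSet_lt measurable_const hF
  set F1 := Sᶜ.indicator F with hF1
  set F2 := S.indicator F with hF2d
  have hF1m : Measurable F1 := hF.indicator hSm.compl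
  have hF2m : Measurable F2 := hF.indicator hSm
  have hsplit : ∀ x, pot F x = pot F1 x + pot F2 x := by
    intro x
    rw [← pot_add hF1m]
    congr 1; ext y
    exact (congrFun (Set.indicator_compl_add_self S F) y).symm
  -- The potential of the bounded part is bounded by the constant `A`.
  obtain ⟨A, hA0, hA⟩ : ∃ A : ℝ, 0 ≤ A ∧ ∀ x, pot F1 x ≤ ENNReal.ofReal A := by
    refine ⟨C' / (4 - 2) * M, by positivity, fun x => ?_⟩
    rw [ENNReal.ofReal_mul (by positivity), ENNReal.ofReal_natCast]
    calc pot F1 x ≤ ∫⁻ z in Metric.ball (0 : R4) 1, wt 2 z * M := by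
          unfold pot
          gcongr with z
          by_cases h : x + z ∈ S
          · simp [hF1, h]
          · rw [hF1, Set.indicator_of_mem (by exact h)]
            simpa [hS] using h
      _ = (∫⁻ z in Metric.ball (0 : R4) 1, wt 2 z) * M := lintegral_mul_const _ (measurable_wt 2)
      _ ≤ _ := by gcongr; exact hC' 2 (by norm_num)
  have hI : ∫⁻ x, pot F1 x ^ 2 < ⊤ := by
    have h := hC F1 hF1m 1 le_rfl
    simp only [mul_one, pow_one] at h
    refine h.trans_lt ?_
    have : ∫⁻ y, F1 y ^ 2 < ⊤ := by
      refine lt_of_le_of_lt (lintegral_mono fun y => ?_) hF2.lt_top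
      gcongr
      exact Set.indicator_le_self _ _ _
    finiteness
  set I := ∫⁻ x, pot F1 x ^ 2 with hIdef
  have hmom : ∀ j : ℕ, ∫⁻ x, ‖u x‖ₑ ^ (2 * (j + 1)) ≤ 4 ^ (j + 1) *
      (ENNReal.ofReal (A ^ (2 * j)) * I +
        ENNReal.ofReal ((C * δ * (j + 1 : ℕ)) ^ (j + 1)) * ENNReal.ofReal C) := by
    intro j
    have hp1 := measurable_pot hF1m
    have hp2 := measurable_pot hF2m
    calc ∫⁻ x, ‖u x‖ₑ ^ (2 * (j + 1)) ≤ ∫⁻ x, 4 ^ (j + 1) *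
          (ENNReal.ofReal (A ^ (2 * j)) * pot F1 x ^ 2 + pot F2 x ^ (2 * (j + 1))) := by
          refine lintegral_mono fun x => ?_
          calc ‖u x‖ₑ ^ (2 * (j + 1)) ≤ (pot F1 x + pot F2 x) ^ (2 * (j + 1)) := by
                gcongr; rw [← hsplit]; exact hle x
            _ ≤ 2 ^ (2 * (j + 1)) * (pot F1 x ^ (2 * (j + 1)) + pot F2 x ^ (2 * (j + 1))) :=
                add_pow_le_two_pow _ _ _
            _ ≤ _ := by
                rw [pow_mul 2 2]
                norm_num
                gcongr
                rw [mul_add, pow_add, mul_one, ENNReal.ofReal_pow hA0]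
                gcongr
                exact hA x
      _ = 4 ^ (j + 1) * (ENNReal.ofReal (A ^ (2 * j)) * I + ∫⁻ x, pot F2 x ^ (2 * (j + 1))) := by
          rw [lintegral_const_mul _ (by fun_prop), lintegral_add_left (by fun_prop),
            lintegral_const_mul _ (by fun_prop)]
      _ ≤ _ := by
          gcongr
          refine (hC F2 hF2m (j + 1) (by omega)).trans ?_
          calc _ ≤ ENNReal.ofReal (C * (j + 1 : ℕ)) ^ (j + 1) * ENNReal.ofReal C *
                ENNReal.ofReal δ ^ (j + 1) := by gcongr
            _ = _ := by
              rw [mul_right_comm, ← mul_pow, ← ENNReal.ofReal_mul (by positivity),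
                ← ENNReal.ofReal_pow (by positivity)]
              congr 3; ring
  calc ∫⁻ x, ENNReal.ofReal (Real.exp (α * u x ^ 2) - 1)
      = ∫⁻ x, ∑' j : ℕ, ENNReal.ofReal (α ^ (j + 1) / (j + 1).factorial) *
          ‖u x‖ₑ ^ (2 * (j + 1)) := by
        congr 1; ext x; exact ofReal_exp_sub_one_eq α (u x) hα.le
    _ = ∑' j : ℕ, ENNReal.ofReal (α ^ (j + 1) / (j + 1).factorial) *
          ∫⁻ x, ‖u x‖ₑ ^ (2 * (j + 1)) := by
        rw [lintegral_tsum (fun j => by fun_prop)]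
        congr 1; ext j
        rw [lintegral_const_mul _ (by fun_prop)]
    _ ≤ ∑' j : ℕ, (ENNReal.ofReal (4 * α * ((4 * α * A ^ 2) ^ j / j.factorial)) * I +
          ENNReal.ofReal ((1 / 2) ^ (j + 1)) * ENNReal.ofReal C) := by
        refine ENNReal.tsum_le_tsum fun j => ?_
        refine (mul_le_mul' le_rfl (hmom j)).trans ?_
        rw [← mul_assoc, mul_add, ← mul_assoc, ← mul_assoc]
        rw [show (4 : ℝ≥0∞) = ENNReal.ofReal 4 by norm_num, ← ENNReal.ofReal_pow (by norm_num),
          ← ENNReal.ofReal_mul (by positivity), ← ENNReal.ofReal_mul (by positivity),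
          ← ENNReal.ofReal_mul (by positivity)]
        have hfac : (0 : ℝ) < j.factorial := by positivity
        gcongr ENNReal.ofReal ?_ * _ + ENNReal.ofReal ?_ * _
        · have h1 : (1 : ℝ) / (j + 1).factorial ≤ 1 / j.factorial := by
            gcongr; omega
          calc α ^ (j + 1) / (j + 1).factorial * 4 ^ (j + 1) * A ^ (2 * j)
              = (α ^ (j + 1) * 4 ^ (j + 1) * A ^ (2 * j)) * (1 / (j + 1).factorial) := by ring
            _ ≤ (α ^ (j + 1) * 4 ^ (j + 1) * A ^ (2 * j)) * (1 / j.factorial) := by gcongr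
            _ = _ := by rw [mul_pow, pow_mul]; ring
        · have h2 := Real.pow_div_factorial_le_exp ((j + 1 : ℕ) : ℝ) (by positivity) (j + 1)
          rw [← mul_one ((j + 1 : ℕ) : ℝ), Real.exp_nat_mul, mul_one] at h2
          calc α ^ (j + 1) / (j + 1).factorial * 4 ^ (j + 1) * (C * δ * (j + 1 : ℕ)) ^ (j + 1)
              = (4 * α * C * δ) ^ (j + 1) * (((j + 1 : ℕ) : ℝ) ^ (j + 1) / (j + 1).factorial) := by
                simp only [mul_pow]; ring
            _ ≤ (4 * α * C * δ) ^ (j + 1) * Real.exp 1 ^ (j + 1) := by gcongr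
            _ = (4 * α * C * δ * Real.exp 1) ^ (j + 1) := by rw [mul_pow _ (Real.exp 1)]
            _ ≤ _ := by gcongr
    _ < ⊤ := by
        rw [ENNReal.tsum_add, ENNReal.tsum_mul_right, ENNReal.tsum_mul_right]
        have s1 : ∑' j : ℕ, ENNReal.ofReal (4 * α * ((4 * α * A ^ 2) ^ j / j.factorial)) ≠ ⊤ :=
          ((Real.summable_pow_div_factorial _).mul_left _).tsum_ofReal_ne_top
        have s2 : ∑' j : ℕ, ENNReal.ofReal ((1 / 2 : ℝ) ^ (j + 1)) ≠ ⊤ := by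
          refine Summable.tsum_ofReal_ne_top ?_
          exact (summable_nat_add_iff 1).2 (summable_geometric_of_lt_one (by norm_num) (by norm_num))
        finiteness

/-! ### Green identity and the Newtonian kernel -/

/-- The `i`-th partial derivative. -/
def pd (i : Fin 4) (f : R4 → ℝ) (x : R4) : ℝ := fderiv ℝ f x (EuclideanSpace.single i 1)

lemma contDiff_pd {f : R4 → ℝ} (hf : ContDiff ℝ (⊤ : ℕ∞) f) (i : Fin 4) :
    ContDiff ℝ (⊤ : ℕ∞) (pd i f) := by
  unfold pd
  exact (hf.fderiv_right (m := (⊤ : ℕ∞)) (by simp)).clm_apply contDiff_const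

lemma lapl_eq {f : R4 → ℝ} (hf : ContDiff ℝ (⊤ : ℕ∞) f) (x : R4) :
    lapl f x = ∑ i, pd i (pd i f) x := by
  unfold lapl
  refine Finset.sum_congr rfl fun i _ => ?_
  rw [iteratedFDeriv_two_apply]
  have hd : DifferentiableAt ℝ (fderiv ℝ f) x :=
    (hf.fderiv_right (m := (⊤ : ℕ∞)) (by simp)).differentiable (by simp) x
  change _ = fderiv ℝ (fun y => fderiv ℝ f y (EuclideanSpace.single i 1)) x _
  rw [fderiv_clm_apply hd (differentiableAt_const _)]
  simp

lemma continuous_lapl {f : R4 → ℝ} (hf : ContDiff ℝ (⊤ : ℕ∞) f) : Continuous (lapl f) := by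
  rw [show lapl f = fun x => ∑ i, pd i (pd i f) x from funext (lapl_eq hf)]
  exact continuous_finsetSum _ fun i _ => (contDiff_pd (contDiff_pd hf i) i).continuous

lemma pd_mul {f g : R4 → ℝ} (hf : ContDiff ℝ (⊤ : ℕ∞) f) (hg : ContDiff ℝ (⊤ : ℕ∞) g)
    (i : Fin 4) : pd i (fun y => f y * g y) = fun y => f y * pd i g y + pd i f y * g y := by
  ext x
  unfold pd
  rw [fderiv_fun_mul (hf.differentiable (by simp) x) (hg.differentiable (by simp) x)]
  simp; ring

lemma pd_add {f g : R4 → ℝ} (hf : ContDiff ℝ (⊤ : ℕ∞) f) (hg : ContDiff ℝ (⊤ : ℕ∞) g)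
    (i : Fin 4) : pd i (fun y => f y + g y) = fun y => pd i f y + pd i g y := by
  ext x
  unfold pd
  rw [fderiv_fun_add (hf.differentiable (by simp) x) (hg.differentiable (by simp) x)]
  simp

lemma lapl_mul {f g : R4 → ℝ} (hf : ContDiff ℝ (⊤ : ℕ∞) f) (hg : ContDiff ℝ (⊤ : ℕ∞) g) (x : R4) :
    lapl (fun y => f y * g y) x =
      f x * lapl g x + 2 * ∑ i, pd i f x * pd i g x + lapl f x * g x := by
  rw [lapl_eq (hf.mul hg), lapl_eq hf, lapl_eq hg, Finset.mul_sum, Finset.mul_sum, Finset.sum_mul,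
    ← Finset.sum_add_distrib, ← Finset.sum_add_distrib]
  refine Finset.sum_congr rfl fun i _ => ?_
  have hf' := contDiff_pd hf i
  have hg' := contDiff_pd hg i
  rw [pd_mul hf hg, pd_add (hf.mul hg') (hf'.mul hg), pd_mul hf hg', pd_mul hf' hg]
  ring

lemma pd_comp_add (f : R4 → ℝ) (x : R4) (i : Fin 4) :
    pd i (fun y => f (x + y)) = fun y => pd i f (x + y) := by
  ext y
  unfold pd
  rw [fderiv_comp_add_left]

lemma lapl_comp_add {f : R4 → ℝ} (hf : ContDiff ℝ (⊤ : ℕ∞) f) (x y : R4) :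
    lapl (fun y => f (x + y)) y = lapl f (x + y) := by
  rw [lapl_eq (f := fun y => f (x + y)) (hf.comp (by fun_prop)), lapl_eq hf]
  refine Finset.sum_congr rfl fun i _ => ?_
  rw [pd_comp_add, pd_comp_add]

lemma hasCompactSupport_pd {f : R4 → ℝ} (hf : HasCompactSupport f) (i : Fin 4) :
    HasCompactSupport (pd i f) := hf.fderiv_apply ℝ _

lemma tsupport_pd_subset (f : R4 → ℝ) (i : Fin 4) : tsupport (pd i f) ⊆ tsupport f :=
  tsupport_fderiv_apply_subset ℝ _

lemma hasCompactSupport_lapl {f : R4 → ℝ} (hf : ContDiff ℝ (⊤ : ℕ∞) f)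
    (hc : HasCompactSupport f) : HasCompactSupport (lapl f) := by
  refine hc.mono' fun x hx => ?_
  by_contra h
  apply hx
  rw [lapl_eq hf]
  refine Finset.sum_eq_zero fun i _ => ?_
  exact image_eq_zero_of_notMem_tsupport fun h' =>
    h (tsupport_pd_subset _ i (tsupport_pd_subset _ i h'))

lemma integral_pd {f g : R4 → ℝ} (hf : ContDiff ℝ (⊤ : ℕ∞) f) (hg : ContDiff ℝ (⊤ : ℕ∞) g)
    (hc : HasCompactSupport f) (i : Fin 4) :
    ∫ x, f x * pd i g x = -∫ x, pd i f x * g x := by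
  have hf' := contDiff_pd hf i
  have hg' := contDiff_pd hg i
  refine integral_mul_fderiv_eq_neg_fderiv_mul_of_integrable ?_ ?_ ?_
    (fun x _ => hf.differentiable (by simp) x) (fun x _ => hg.differentiable (by simp) x)
  · exact (hf'.continuous.mul hg.continuous).integrable_of_hasCompactSupport
      ((hasCompactSupport_pd hc i).mul_right)
  · exact (hf.continuous.mul hg'.continuous).integrable_of_hasCompactSupport hc.mul_right
  · exact (hf.continuous.mul hg.continuous).integrable_of_hasCompactSupport hc.mul_right

/-- Green's second identity on the whole space. -/
lemma integral_lapl {f g : R4 → ℝ} (hf : ContDiff ℝ (⊤ : ℕ∞) f) (hg : ContDiff ℝ (⊤ : ℕ∞) g)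
    (hc : HasCompactSupport f) : ∫ x, f x * lapl g x = ∫ x, lapl f x * g x := by
  simp only [lapl_eq hf, lapl_eq hg, Finset.mul_sum, Finset.sum_mul]
  have h1 := fun i => contDiff_pd hf i
  have h2 := fun i => contDiff_pd (h1 i) i
  have h3 := fun i => contDiff_pd hg i
  have h4 := fun i => contDiff_pd (h3 i) i
  have h5 := hasCompactSupport_pd hc
  have i1 : ∀ i, Integrable fun x => f x * pd i (pd i g) x := fun i =>
    (hf.continuous.mul (h4 i).continuous).integrable_of_hasCompactSupport hc.mul_right
  have i2 : ∀ i, Integrable fun x => pd i (pd i f) x * g x := fun i =>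
    ((h2 i).continuous.mul hg.continuous).integrable_of_hasCompactSupport
      (hasCompactSupport_pd (h5 i) i).mul_right
  rw [integral_finsetSum _ fun i _ => i1 i, integral_finsetSum _ fun i _ => i2 i]
  refine Finset.sum_congr rfl fun i _ => ?_
  rw [integral_pd hf (h3 i) hc, integral_pd (h1 i) hg (h5 i), neg_neg]

/-- A smooth regularisation of the Newtonian kernel `|x|^{-2}` of `ℝ⁴`. -/
def newt (δ : ℝ) (x : R4) : ℝ := (‖x‖ ^ 2 + δ ^ 2)⁻¹

lemma contDiff_newt {δ : ℝ} (hδ : 0 < δ) : ContDiff ℝ (⊤ : ℕ∞) (newt δ) := by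
  unfold newt
  exact ((contDiff_norm_sq ℝ).add contDiff_const).inv fun x => by positivity

lemma lapl_newt {δ : ℝ} (hδ : 0 < δ) (x : R4) :
    lapl (newt δ) x = -(8 * δ ^ 2 / (‖x‖ ^ 2 + δ ^ 2) ^ 3) := by
  have hq : ∀ y : R4, HasFDerivAt (fun y : R4 => ‖y‖ ^ 2 + δ ^ 2) (2 • innerSL ℝ y) y := fun y =>
    (hasStrictFDerivAt_norm_sq y).hasFDerivAt.add_const _
  have hne : ∀ y : R4, ‖y‖ ^ 2 + δ ^ 2 ≠ 0 := fun y => by positivity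
  have h1 : ∀ i, pd i (newt δ) = fun y => -2 * y i * ((‖y‖ ^ 2 + δ ^ 2) ^ 2)⁻¹ := by
    intro i; ext y
    have : HasFDerivAt (newt δ) _ y := (hasDerivAt_inv (hne y)).comp_hasFDerivAt y (hq y)
    unfold pd
    rw [this.fderiv]
    simp [EuclideanSpace.inner_single_right]
    ring
  have h2 : ∀ i, pd i (pd i (newt δ)) x =
      -2 * ((‖x‖ ^ 2 + δ ^ 2) ^ 2)⁻¹ + 8 * x i ^ 2 * ((‖x‖ ^ 2 + δ ^ 2) ^ 3)⁻¹ := by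
    intro i
    rw [h1]
    have a1 : HasFDerivAt (fun y : R4 => -2 * y i) _ x :=
      (EuclideanSpace.proj (𝕜 := ℝ) i).hasFDerivAt.const_mul (-2)
    have a2 : HasFDerivAt (fun y : R4 => ((‖y‖ ^ 2 + δ ^ 2) ^ 2)⁻¹) _ x :=
      (hasDerivAt_inv (pow_ne_zero 2 (hne x))).comp_hasFDerivAt x ((hq x).pow 2)
    unfold pd
    rw [(a1.fun_mul a2).fderiv]
    have := hne x
    simp [EuclideanSpace.inner_single_right]
    field_simp
    ring
  rw [lapl_eq (contDiff_newt hδ)]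
  simp only [h2]
  have hn : ‖x‖ ^ 2 = ∑ i, x i ^ 2 := by simp [EuclideanSpace.norm_sq_eq]
  have := hne x
  rw [Finset.sum_add_distrib, ← Finset.sum_mul, ← Finset.sum_mul, ← Finset.mul_sum, ← hn]
  simp
  field_simp
  ring

lemma integrable_newt_mass : Integrable fun y : R4 => 8 / (1 + ‖y‖ ^ 2) ^ 3 := by
  have := (integrable_rpow_neg_one_add_norm_sq (E := R4) (μ := volume) (r := 6)
    (by norm_num)).const_mul 8
  refine this.congr (ae_of_all _ fun y => ?_)
  simp only
  rw [show (-6 / 2 : ℝ) = -((3 : ℕ) : ℝ) by norm_num, Real.rpow_neg (by positivity),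
    Real.rpow_natCast]
  ring

/-- Potential bound for test functions: pair `Δφ` with the regularised kernel, move the Laplacian
onto the kernel, and let the regularisation tend to zero. -/
lemma enorm_le_lintegral_lapl : ∃ c : ℝ, 0 < c ∧ ∀ φ : R4 → ℝ, ContDiff ℝ (⊤ : ℕ∞) φ →
    HasCompactSupport φ →
    ENNReal.ofReal c * ‖φ 0‖ₑ ≤ ∫⁻ y, wt 2 y * ‖lapl φ y‖ₑ := by
  refine ⟨∫ y : R4, 8 / (1 + ‖y‖ ^ 2) ^ 3, ?_, fun φ hφ hc => ?_⟩
  · rw [integral_pos_iff_support_of_nonneg (fun y => by positivity) integrable_newt_mass]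
    have : (Function.support fun y : R4 => 8 / (1 + ‖y‖ ^ 2) ^ 3) = Set.univ := by
      ext y
      have : (1 + ‖y‖ ^ 2) ^ 3 ≠ 0 := by positivity
      simpa using this
    rw [this]; simp
  set c := ∫ y : R4, 8 / (1 + ‖y‖ ^ 2) ^ 3 with hcdef
  have hc0 : 0 ≤ c := integral_nonneg fun y => by positivity
  obtain ⟨B, hB⟩ := hc.exists_bound_of_continuous hφ.continuous
  have hscale : ∀ δ : ℝ, 0 < δ → ∫ y, φ (δ • y) * (8 / (1 + ‖y‖ ^ 2) ^ 3) =
      -∫ y, lapl φ y * newt δ y := by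
    intro δ hδ
    rw [← integral_lapl hφ (contDiff_newt hδ) hc, ← integral_neg]
    have := Measure.integral_comp_smul volume (fun y : R4 => -(φ y * lapl (newt δ) y)) δ
    rw [finrank_euclideanSpace, Fintype.card_fin, abs_of_nonneg (by positivity),
      eq_inv_smul_iff₀ (by positivity)] at this
    rw [← this, smul_eq_mul, ← integral_const_mul]
    congr 1; ext y
    rw [lapl_newt hδ, norm_smul, Real.norm_of_nonneg hδ.le]
    have h1 : (δ * ‖y‖) ^ 2 + δ ^ 2 = δ ^ 2 * (1 + ‖y‖ ^ 2) := by ring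
    rw [h1]
    field_simp
  have hbound : ∀ δ : ℝ, 0 < δ → ‖∫ y, φ (δ • y) * (8 / (1 + ‖y‖ ^ 2) ^ 3)‖ₑ ≤
      ∫⁻ y, wt 2 y * ‖lapl φ y‖ₑ := by
    intro δ hδ
    rw [hscale δ hδ, enorm_neg]
    refine (enorm_integral_le_lintegral_enorm _).trans (lintegral_mono_ae ?_)
    filter_upwards [Measure.ae_ne volume (0 : R4)] with y hy
    have hy' : 0 < ‖y‖ := norm_pos_iff.2 hy
    rw [enorm_mul, mul_comm]
    gcongr
    unfold wt newt
    rw [Real.enorm_of_nonneg (by positivity), Real.rpow_neg (norm_nonneg _), Real.rpow_two]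
    gcongr
    nlinarith
  have hlim : Tendsto (fun n : ℕ => ∫ y, φ ((1 / ((n : ℝ) + 1)) • y) * (8 / (1 + ‖y‖ ^ 2) ^ 3))
      atTop (𝓝 (∫ y : R4, φ 0 * (8 / (1 + ‖y‖ ^ 2) ^ 3))) := by
    refine tendsto_integral_of_dominated_convergence (fun y => B * (8 / (1 + ‖y‖ ^ 2) ^ 3))
      (fun n => ?_) (integrable_newt_mass.const_mul B) (fun n => ae_of_all _ fun y => ?_)
      (ae_of_all _ fun y => ?_)
    · have hcont : Continuous fun y : R4 => φ ((1 / ((n : ℝ) + 1)) • y) :=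
        hφ.continuous.comp (continuous_const_smul _)
      exact hcont.aestronglyMeasurable.mul
        integrable_newt_mass.aestronglyMeasurable
    · rw [norm_mul, Real.norm_of_nonneg (r := 8 / (1 + ‖y‖ ^ 2) ^ 3) (by positivity)]
      gcongr
      exact hB _
    · refine Tendsto.mul_const _ ((hφ.continuous.tendsto 0).comp ?_)
      simpa using (tendsto_one_div_add_atTop_nhds_zero_nat (𝕜 := ℝ)).smul_const y
  rw [integral_const_mul, ← hcdef] at hlim
  have := le_of_tendsto hlim.enorm (Eventually.of_forall fun n => hbound _ (by positivity))
  rwa [enorm_mul, mul_comm, Real.enorm_of_nonneg hc0] at this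

/-! ### Domination of a smooth function by a potential -/

lemma abs_pd_le (u : R4 → ℝ) (i : Fin 4) (x : R4) : |pd i u x| ≤ ‖gradient u x‖ := by
  have h := (fderiv ℝ u x).le_opNorm (EuclideanSpace.single i 1)
  rw [gradient, LinearIsometryEquiv.norm_map]
  simpa [pd] using h

/-- Every smooth function is dominated by the truncated potential of
`|Δu| + |∇u| + |u|`, with a universal constant. -/
lemma exists_enorm_le_pot : ∃ K : ℝ, 0 ≤ K ∧ ∀ u : R4 → ℝ, ContDiff ℝ (⊤ : ℕ∞) u → ∀ x,
    ‖u x‖ₑ ≤ pot (fun y => ENNReal.ofReal (K * (|lapl u y| + ‖gradient u y‖ + |u y|))) x := by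
  obtain ⟨c, hc, hcφ⟩ := enorm_le_lintegral_lapl
  let η : ContDiffBump (0 : R4) := ⟨1 / 4, 1 / 2, by norm_num, by norm_num⟩
  have hη : ContDiff ℝ (⊤ : ℕ∞) (η : R4 → ℝ) := η.contDiff
  have hηc : HasCompactSupport (η : R4 → ℝ) := η.hasCompactSupport
  have hη1 : η (0 : R4) = 1 := η.one_of_mem_closedBall (by simp [η])
  have hball : tsupport (η : R4 → ℝ) ⊆ Metric.ball 0 1 := by
    rw [η.tsupport_eq]
    exact Metric.closedBall_subset_ball (by simp only [η]; norm_num)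
  choose B hB using fun i => (hasCompactSupport_pd hηc i).exists_bound_of_continuous
    (contDiff_pd hη i).continuous
  obtain ⟨L, hL⟩ := (hasCompactSupport_lapl hη hηc).exists_bound_of_continuous
    (continuous_lapl hη)
  have hB0 : ∀ i, 0 ≤ B i := fun i => (norm_nonneg _).trans (hB i 0)
  have hL0 : 0 ≤ L := (norm_nonneg _).trans (hL 0)
  have hS0 : 0 ≤ ∑ i, B i := Finset.sum_nonneg fun i _ => hB0 i
  set K := 1 + 2 * ∑ i, B i + L with hK
  have hK0 : 0 ≤ K := by positivity
  refine ⟨K / c, by positivity, fun u hu x => ?_⟩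
  set v : R4 → ℝ := fun y => u (x + y) with hv
  have hvs : ContDiff ℝ (⊤ : ℕ∞) v := hu.comp (by fun_prop)
  have key : ∀ y, |lapl (fun y => η y * v y) y| ≤
      K * (|lapl u (x + y)| + ‖gradient u (x + y)‖ + |u (x + y)|) := by
    intro y
    have e1 : lapl v y = lapl u (x + y) := lapl_comp_add hu x y
    have e2 : ∀ i, pd i v y = pd i u (x + y) := fun i => congrFun (pd_comp_add u x i) y
    rw [lapl_mul hη hvs, e1]
    simp only [e2]
    have b1 : |η y * lapl u (x + y)| ≤ 1 * |lapl u (x + y)| := by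
      rw [abs_mul, abs_of_nonneg η.nonneg]
      gcongr
      exact η.le_one
    have b2 : |2 * ∑ i, pd i η y * pd i u (x + y)| ≤ (2 * ∑ i, B i) * ‖gradient u (x + y)‖ := by
      rw [abs_mul, abs_of_nonneg (by norm_num : (0 : ℝ) ≤ 2), mul_assoc, Finset.sum_mul]
      gcongr
      refine (Finset.abs_sum_le_sum_abs _ _).trans (Finset.sum_le_sum fun i _ => ?_)
      rw [abs_mul]
      exact mul_le_mul (hB i y) (abs_pd_le u i _) (abs_nonneg _) (hB0 i)
    have b3 : |lapl η y * v y| ≤ L * |u (x + y)| := by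
      rw [abs_mul]
      exact mul_le_mul_of_nonneg_right (hL y) (abs_nonneg _)
    have c1 : 1 * |lapl u (x + y)| ≤ K * |lapl u (x + y)| := by
      gcongr; linarith
    have c2 : (2 * ∑ i, B i) * ‖gradient u (x + y)‖ ≤ K * ‖gradient u (x + y)‖ := by
      gcongr; linarith
    have c3 : L * |u (x + y)| ≤ K * |u (x + y)| := by
      gcongr; linarith
    refine (abs_add_three _ _ _).trans ?_
    linarith
  have hzero : ∀ y, y ∉ Metric.ball (0 : R4) 1 → lapl (fun y => η y * v y) y = 0 := by
    intro y hy
    have hy' : y ∉ tsupport (η : R4 → ℝ) := fun h => hy (hball h)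
    rw [lapl_mul hη hvs, lapl_eq hη]
    have p1 : ∀ i, pd i η y = 0 := fun i =>
      image_eq_zero_of_notMem_tsupport fun h => hy' (tsupport_pd_subset _ i h)
    have p2 : ∀ i, pd i (pd i η) y = 0 := fun i =>
      image_eq_zero_of_notMem_tsupport fun h =>
        hy' (tsupport_pd_subset _ i (tsupport_pd_subset _ i h))
    simp [p1, p2, image_eq_zero_of_notMem_tsupport hy']
  have h := hcφ (fun y => η y * v y) (hη.mul hvs) hηc.mul_right
  have h0 : η 0 * v 0 = u x := by simp [hη1, hv]
  rw [h0, ← setLIntegral_eq_of_support_subset (s := Metric.ball (0 : R4) 1)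
    (fun y hy => by
      by_contra hn
      exact hy (by simp [hzero y hn]))] at h
  have hcne : ENNReal.ofReal c ≠ 0 := by simpa using hc
  rw [← ENNReal.mul_le_mul_iff_right hcne ENNReal.ofReal_ne_top]
  refine h.trans ?_
  unfold pot
  rw [← lintegral_const_mul' _ _ ENNReal.ofReal_ne_top]
  refine lintegral_mono fun y => ?_
  rw [mul_left_comm, ← ENNReal.ofReal_mul hc.le, Real.enorm_eq_ofReal_abs]
  gcongr
  refine (key y).trans (le_of_eq ?_)
  field_simp

/-- Theorem 1.1 (first part, singular Adams-type inequality): for `0 ≤ β < 4`, `α > 0` and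
every smooth `u` with finite `W^{2,2}`-norm, `∫ (e^{αu²} − 1)/|x|^β dx < ∞`. -/
theorem stmt_3 (β α : ℝ) (hβ0 : 0 ≤ β) (hβ4 : β < 4) (hα : 0 < α)
    (u : R4 → ℝ) (hu : ContDiff ℝ (⊤ : ℕ∞) u)
    (hfin : (∫⁻ x : R4,
        ENNReal.ofReal ((lapl u x) ^ 2 + ‖gradient u x‖ ^ 2 + (u x) ^ 2)) < ⊤) :
    (∫⁻ x : R4, ENNReal.ofReal ((Real.exp (α * (u x) ^ 2) - 1) / ‖x‖ ^ β)) < ⊤ := by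
  obtain ⟨K, hK, hpot⟩ := exists_enorm_le_pot
  obtain ⟨C, hC0, hC⟩ := lintegral_wt
  have hcu := hu.continuous
  have hcl := continuous_lapl hu
  have hcg : Continuous (gradient u) :=
    (InnerProductSpace.toDual ℝ R4).symm.continuous.comp (hu.continuous_fderiv (by simp))
  have hexp : ∫⁻ x, ENNReal.ofReal (Real.exp (α * u x ^ 2) - 1) < ⊤ := by
    refine lintegral_exp_lt_top hcu.measurable (by fun_prop) (fun x => ENNReal.ofReal_ne_top) ?_
      (hpot u hu) hα
    refine ne_top_of_le_ne_top (b := ENNReal.ofReal (K ^ 2 * 3) * ∫⁻ x : R4,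
        ENNReal.ofReal ((lapl u x) ^ 2 + ‖gradient u x‖ ^ 2 + (u x) ^ 2)) (by finiteness) ?_
    rw [← lintegral_const_mul' _ _ ENNReal.ofReal_ne_top]
    refine lintegral_mono fun x => ?_
    rw [← ENNReal.ofReal_pow (by positivity), ← ENNReal.ofReal_mul (by positivity)]
    apply ENNReal.ofReal_le_ofReal
    rw [mul_pow, mul_assoc, ← sq_abs (lapl u x), ← sq_abs (u x)]
    gcongr
    nlinarith [sq_nonneg (|lapl u x| - ‖gradient u x‖), sq_nonneg (|lapl u x| - |u x|),
      sq_nonneg (‖gradient u x‖ - |u x|)]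
  have hnn : ∀ x, 0 ≤ Real.exp (α * u x ^ 2) - 1 := fun x => by
    have : 0 ≤ α * u x ^ 2 := by positivity
    linarith [Real.one_le_exp this]
  rw [← lintegral_add_compl _ (measurableSet_ball (x := (0 : R4)) (ε := 1))]
  refine ENNReal.add_lt_top.2 ⟨?_, ?_⟩
  · -- Near the origin `u` is bounded and the weight is integrable.
    obtain ⟨A, hA⟩ := (isCompact_closedBall (0 : R4) 1).exists_bound_of_continuousOn
      (f := fun x => Real.exp (α * u x ^ 2) - 1) (by fun_prop)
    calc _ ≤ ∫⁻ x in Metric.ball (0 : R4) 1, ENNReal.ofReal A * wt β x := by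
          refine setLIntegral_mono' measurableSet_ball fun x hx => ?_
          have h := (le_abs_self _).trans (hA x (Metric.ball_subset_closedBall hx))
          unfold wt
          rw [← ENNReal.ofReal_mul ((hnn x).trans h), Real.rpow_neg (norm_nonneg _),
            ← div_eq_mul_inv]
          gcongr
      _ = ENNReal.ofReal A * ∫⁻ x in Metric.ball (0 : R4) 1, wt β x :=
          lintegral_const_mul _ (measurable_wt β)
      _ < ⊤ := ENNReal.mul_lt_top ENNReal.ofReal_lt_top ((hC β hβ4).trans_lt ENNReal.ofReal_lt_top)
  · -- Away from the origin the weight is at most one.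
    refine lt_of_le_of_lt ?_ hexp
    refine le_trans (setLIntegral_mono' measurableSet_ball.compl fun x hx => ?_)
      (setLIntegral_le_lintegral _ _)
    apply ENNReal.ofReal_le_ofReal
    apply div_le_self (hnn x)
    refine Real.one_le_rpow ?_ hβ0
    simpa using hx
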